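/- Fix a > 1 and let k ≥ 1 be an integer. Let δ ∈ (0, e^{a−1}) and let n : [0,δ) → ℝ be continuous with n(0) = 0 and differentiable on (0,δ). Then liminf_{s→0⁺} ( s n'(s) − n(s)² − (1/4) Σ_{j=1}^{k−1} X₁(s)² ⋯ X_j(s)² ) · ( X₁(s)² ⋯ X_k(s)² )^{−1} ≤ 1/4, where for k = 1 the sum Σ_{j=1}^{0} is empty (equal to 0). -/

import Mathlib

/-!
The expression `s n' - n²` is a Riccati operator, and half of `p := π₁ + ⋯ + π_k` solves the
critical equation `s q' - q² = (1/4) Σ_{j ≤ k} π_j²`, because `s X_j' = X_j π_j`.  Writing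
`n = p / 2 + π_k w` turns the inequality
`s n' - n² - (1/4) Σ_{j < k} π_j² ≥ (1/4 + ε) π_k²` into `s w' ≥ π_k (ε + w²)`.
As `s (log X_k)' = π_k`, this says that `arctan (w / √ε) - √ε log X_k` is nondecreasing near `0⁺`.
But `arctan` is bounded and `log X_k → -∞` at `0⁺`, so no `ε > 0` is possible.
-/

open MeasureTheory Real Filter Set

noncomputable section

abbrev E3 := EuclideanSpace ℝ (Fin 3)

/-- `i`-th partial derivative of a spinor field. -/
def pd (i : Fin 3) (φ : E3 → ℂ × ℂ) (x : E3) : ℂ × ℂ :=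
  fderiv ℝ φ x (EuclideanSpace.single i 1)

/-- The operator `σ·∇` built from the Pauli matrices. -/
def sigmaGrad (φ : E3 → ℂ × ℂ) (x : E3) : ℂ × ℂ :=
  ((pd 2 φ x).1 + (pd 0 φ x).2 - Complex.I * (pd 1 φ x).2,
   (pd 0 φ x).1 + Complex.I * (pd 1 φ x).1 - (pd 2 φ x).2)

/-- Squared norm of a two-spinor value. -/
def nsq (p : ℂ × ℂ) : ℝ := ‖p.1‖ ^ 2 + ‖p.2‖ ^ 2

/-- Pauli matrix `σ₁` acting on `ℂ²`. -/
def pauli1 (p : ℂ × ℂ) : ℂ × ℂ := (p.2, p.1)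

/-- Pauli matrix `σ₂` acting on `ℂ²`. -/
def pauli2 (p : ℂ × ℂ) : ℂ × ℂ := (-(Complex.I * p.2), Complex.I * p.1)

/-- Pauli matrix `σ₃` acting on `ℂ²`. -/
def pauli3 (p : ℂ × ℂ) : ℂ × ℂ := (p.1, -p.2)

/-- The spin-orbit operator `σ·L`. -/
def sigmaL (φ : E3 → ℂ × ℂ) (x : E3) : ℂ × ℂ :=
  (-Complex.I) •
    (pauli1 ((x 1 : ℂ) • pd 2 φ x - (x 2 : ℂ) • pd 1 φ x) +
     pauli2 ((x 2 : ℂ) • pd 0 φ x - (x 0 : ℂ) • pd 2 φ x) +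
     pauli3 ((x 0 : ℂ) • pd 1 φ x - (x 1 : ℂ) • pd 0 φ x))

/-- `σ·x = σ₁x₁ + σ₂x₂ + σ₃x₃` acting on a spinor value. -/
def sigmaDotX (x : E3) (p : ℂ × ℂ) : ℂ × ℂ :=
  ((x 2 : ℂ) * p.1 + ((x 0 : ℂ) - Complex.I * (x 1 : ℂ)) * p.2,
   ((x 0 : ℂ) + Complex.I * (x 1 : ℂ)) * p.1 - (x 2 : ℂ) * p.2)

/-- Inequality (R8) for a weight `W`, a radius `R` and a constant `C`. -/
def IneqR8 (W : ℝ → ℝ) (R C : ℝ) : Prop :=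
  ∀ φ : E3 → ℂ × ℂ, ContDiff ℝ (⊤ : ℕ∞) φ → HasCompactSupport φ →
    (∫ x : E3, (W ‖x‖ / ‖x‖) * nsq (φ x)) +
        C * (∫ x in Metric.sphere (0 : E3) R, nsq (φ x) ∂μH[2]) ≤
      ∫ x : E3, (nsq (sigmaGrad φ x) / (1 + W ‖x‖ / ‖x‖) + nsq (φ x))

/-- Iterated logarithmic functions: `Xk a 1 = (a - log s)⁻¹`, `Xk a (k+1) = X₁ ∘ Xk a k`. -/
def Xk (a : ℝ) : ℕ → ℝ → ℝ
  | 0, s => s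
  | k + 1, s => (a - Real.log (Xk a k s))⁻¹

/-- `π_j(s) = X₁(s)⋯X_j(s)`. -/
def piX (a : ℝ) (j : ℕ) (s : ℝ) : ℝ := ∏ i ∈ Finset.Icc 1 j, Xk a i s

/-- `Σ_{j=1}^k X₁(s)²⋯X_j(s)²`. -/
def sumX2 (a : ℝ) (k : ℕ) (s : ℝ) : ℝ := ∑ j ∈ Finset.Icc 1 k, (piX a j s) ^ 2


/-- The sum `π₁(s) + ⋯ + π_k(s)`; half of it solves the critical Riccati equation. -/
def sumPi (a : ℝ) (k : ℕ) (s : ℝ) : ℝ := ∑ j ∈ Finset.Icc 1 k, piX a j s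

lemma piX_succ (a : ℝ) (k : ℕ) (s : ℝ) : piX a (k + 1) s = piX a k s * Xk a (k + 1) s := by
  simp [piX, Finset.prod_Icc_succ_top]

lemma sumPi_succ (a : ℝ) (k : ℕ) (s : ℝ) :
    sumPi a (k + 1) s = sumPi a k s + piX a (k + 1) s := by
  simp [sumPi, Finset.sum_Icc_succ_top]

lemma sumX2_succ (a : ℝ) (k : ℕ) (s : ℝ) :
    sumX2 a (k + 1) s = sumX2 a k s + (piX a (k + 1) s) ^ 2 := by
  simp [sumX2, Finset.sum_Icc_succ_top]

lemma one_lt_sub_log {a x : ℝ} (hx : x ∈ Ioo 0 (exp (a - 1))) : 1 < a - log x := by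
  have := (Real.log_lt_iff_lt_exp hx.1).2 hx.2
  linarith

lemma Xk_mem {a : ℝ} (ha : 1 < a) {s : ℝ} (hs : s ∈ Ioo 0 (exp (a - 1))) (k : ℕ) :
    Xk a k s ∈ Ioo 0 (exp (a - 1)) := by
  induction k with
  | zero => exact hs
  | succ k ih =>
    have h := one_lt_sub_log ih
    refine ⟨inv_pos.2 (by linarith), (inv_lt_one_of_one_lt₀ h).trans ?_⟩
    exact Real.one_lt_exp_iff.2 (by linarith)

lemma piX_pos {a : ℝ} (ha : 1 < a) {s : ℝ} (hs : s ∈ Ioo 0 (exp (a - 1))) (k : ℕ) :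
    0 < piX a k s :=
  Finset.prod_pos fun i _ => (Xk_mem ha hs i).1

lemma hasDerivAt_Xk {a : ℝ} (ha : 1 < a) {s : ℝ} (hs : s ∈ Ioo 0 (exp (a - 1))) (k : ℕ) :
    HasDerivAt (Xk a k) (Xk a k s * piX a k s / s) s := by
  have hs0 := hs.1.ne'
  induction k with
  | zero =>
    have : Xk a 0 s * piX a 0 s / s = 1 := by simp [Xk, piX, hs0]
    rw [this]
    exact hasDerivAt_id s
  | succ k ih =>
    have hX := (Xk_mem ha hs k).1.ne'
    have hL : a - log (Xk a k s) ≠ 0 := by linarith [one_lt_sub_log (Xk_mem ha hs k)]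
    have h := ((ih.log hX).const_sub a).inv hL
    refine h.congr_deriv ?_
    rw [piX_succ, Xk]
    field_simp

lemma hasDerivAt_piX {a : ℝ} (ha : 1 < a) {s : ℝ} (hs : s ∈ Ioo 0 (exp (a - 1))) (k : ℕ) :
    HasDerivAt (piX a k) (piX a k s * sumPi a k s / s) s := by
  induction k with
  | zero =>
    have : piX a 0 = fun _ => (1 : ℝ) := by ext; simp [piX]
    rw [this]
    simpa [sumPi] using hasDerivAt_const s (1 : ℝ)
  | succ k ih =>
    have h := ih.mul (hasDerivAt_Xk ha hs (k + 1))
    have e : piX a (k + 1) = piX a k * Xk a (k + 1) := by ext t; exact piX_succ a k t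
    rw [e]
    refine h.congr_deriv ?_
    simp only [Pi.mul_apply, sumPi_succ, piX_succ]
    ring

/-- The critical Riccati identity: `q = sumPi / 2` satisfies `s q' - q² = sumX2 / 4`. -/
lemma hasDerivAt_sumPi {a : ℝ} (ha : 1 < a) {s : ℝ} (hs : s ∈ Ioo 0 (exp (a - 1))) (k : ℕ) :
    HasDerivAt (sumPi a k) (((sumPi a k s) ^ 2 + sumX2 a k s) / (2 * s)) s := by
  have hs0 := hs.1.ne'
  induction k with
  | zero =>
    have : sumPi a 0 = fun _ => (0 : ℝ) := by ext; simp [sumPi]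
    rw [this]
    simpa [sumX2] using hasDerivAt_const s (0 : ℝ)
  | succ k ih =>
    have h := ih.add (hasDerivAt_piX ha hs (k + 1))
    have e : sumPi a (k + 1) = sumPi a k + piX a (k + 1) := by ext t; exact sumPi_succ a k t
    rw [e]
    refine h.congr_deriv ?_
    simp only [Pi.add_apply, sumPi_succ, sumX2_succ]
    field_simp
    ring

lemma tendsto_Xk (a : ℝ) (k : ℕ) :
    Tendsto (Xk a k) (nhdsWithin 0 (Ioi 0)) (nhdsWithin 0 (Ioi 0)) := by
  induction k with
  | zero => exact tendsto_id
  | succ k ih =>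
    have h1 := Real.tendsto_log_nhdsGT_zero.comp ih
    have h2 : Tendsto (fun s => a - log (Xk a k s)) (nhdsWithin 0 (Ioi 0)) atTop := by
      simpa [sub_eq_add_neg] using
        tendsto_atTop_add_const_left _ a (tendsto_neg_atBot_atTop.comp h1)
    exact tendsto_inv_atTop_nhdsGT_zero.comp h2

theorem liminf_cascade (a : ℝ) (ha : 1 < a) (k : ℕ) (hk : 1 ≤ k)
    (δ : ℝ) (hδ : δ ∈ Set.Ioo 0 (Real.exp (a - 1)))
    (n : ℝ → ℝ) (hc : ContinuousOn n (Set.Ico 0 δ)) (h0 : n 0 = 0)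
    (hd : ∀ s ∈ Set.Ioo 0 δ, DifferentiableAt ℝ n s) :
    Filter.liminf
      (fun s => (s * deriv n s - (n s) ^ 2 - (1 / 4) * sumX2 a (k - 1) s) *
        ((piX a k s) ^ 2)⁻¹)
      (nhdsWithin 0 (Set.Ioi 0)) ≤ 1 / 4 := by
  rw [Filter.liminf_eq]
  -- The default value `sSup = 0` of an empty or unbounded set is also at most `1 / 4`.
  refine Real.sSup_le (fun b hb => ?_) (by norm_num)
  by_contra! hlt
  obtain ⟨r, hr, hrb⟩ := (mem_nhdsGT_iff_exists_Ioo_subset).1 hb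
  obtain ⟨c, hc0, hcb⟩ : ∃ c : ℝ, 0 < c ∧ c ^ 2 = b - 1 / 4 :=
    ⟨√(b - 1 / 4), Real.sqrt_pos.2 (by linarith), Real.sq_sqrt (by linarith)⟩
  set w : ℝ → ℝ := fun s => (n s - sumPi a k s / 2) / piX a k s with hw
  set F : ℝ → ℝ := fun s => arctan (w s / c) - c * log (Xk a k s) with hF
  set ρ := min r δ with hρ
  have hρ0 : 0 < ρ := lt_min hr hδ.1
  have hder : ∀ s ∈ Ioo 0 ρ, ∃ d, 0 ≤ d ∧ HasDerivAt F d s := by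
    intro s hs
    have hsr : s ∈ Ioo 0 r := ⟨hs.1, hs.2.trans_le (min_le_left _ _)⟩
    have hsδ : s ∈ Ioo 0 δ := ⟨hs.1, hs.2.trans_le (min_le_right _ _)⟩
    have hse : s ∈ Ioo 0 (exp (a - 1)) := ⟨hs.1, hsδ.2.trans hδ.2⟩
    have hP := piX_pos ha hse k
    have hX := (Xk_mem ha hse k).1
    have hs0 := hs.1
    have hineq : b ≤ (s * deriv n s - (n s) ^ 2 - (1 / 4) * sumX2 a (k - 1) s) *
        ((piX a k s) ^ 2)⁻¹ := hrb hsr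
    rw [← div_eq_mul_inv, le_div_iff₀ (by positivity)] at hineq
    have hS : sumX2 a k s = sumX2 a (k - 1) s + (piX a k s) ^ 2 := by
      have := sumX2_succ a (k - 1) s
      rwa [Nat.sub_add_cancel hk] at this
    have hwd := (((hd s hsδ).hasDerivAt.sub ((hasDerivAt_sumPi ha hse k).div_const 2)).div
      (hasDerivAt_piX ha hse k) hP.ne')
    have hFd := ((hwd.div_const c).arctan).sub (((hasDerivAt_Xk ha hse k).log hX.ne').const_mul c)
    refine ⟨_, ?_, hFd⟩
    simp only [Pi.sub_apply, Pi.div_apply]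
    generalize piX a k s = P at *
    generalize sumPi a k s = p at *
    generalize Xk a k s = X at *
    generalize deriv n s = n' at *
    generalize n s = y at *
    -- The derivative equals `c / (c² + w²) * (w' - π_k (c² + w²) / s)`, and the Riccati
    -- inequality makes the second factor nonnegative.
    have key : 0 ≤ s * n' - (p ^ 2 + sumX2 a k s) / 4 - (y - p / 2) * p
        - (c ^ 2 * P ^ 2 + (y - p / 2) ^ 2) := by
      rw [hS, hcb]; nlinarith
    generalize sumX2 a k s = S at *
    have hD : 0 < c ^ 2 * P ^ 2 + (y - p / 2) ^ 2 := by positivity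
    have hpos : 0 ≤ (s * n' - (p ^ 2 + S) / 4 - (y - p / 2) * p
        - (c ^ 2 * P ^ 2 + (y - p / 2) ^ 2)) * (c * P / (s * (c ^ 2 * P ^ 2 + (y - p / 2) ^ 2))) := by
      positivity
    refine hpos.trans_eq ?_
    have hE : 1 + ((y - p / 2) / P / c) ^ 2
        = (c ^ 2 * P ^ 2 + (y - p / 2) ^ 2) / (c ^ 2 * P ^ 2) := by
      field_simp
    rw [hE]
    generalize hDD : c ^ 2 * P ^ 2 + (y - p / 2) ^ 2 = D at *
    field_simp
    ring
  have hmono : MonotoneOn F (Ioo 0 ρ) := by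
    refine monotoneOn_of_deriv_nonneg (convex_Ioo 0 ρ) ?_ ?_ ?_
    · intro s hs
      obtain ⟨d, -, h⟩ := hder s hs
      exact h.continuousAt.continuousWithinAt
    · intro s hs
      rw [interior_Ioo] at hs
      obtain ⟨d, -, h⟩ := hder s hs
      exact h.differentiableAt.differentiableWithinAt
    · intro s hs
      rw [interior_Ioo] at hs
      obtain ⟨d, hd0, h⟩ := hder s hs
      rwa [h.deriv]
  have hlog := (Real.tendsto_log_nhdsGT_zero.comp (tendsto_Xk a k)).eventually_lt_atBot
    (-(F (ρ / 2) + π / 2) / c)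
  obtain ⟨s, hs1, hs2⟩ := (hlog.and (Ioo_mem_nhdsGT (half_pos hρ0))).exists
  have hle : F s ≤ F (ρ / 2) :=
    hmono ⟨hs2.1, hs2.2.trans (half_lt_self hρ0)⟩ ⟨half_pos hρ0, half_lt_self hρ0⟩ hs2.2.le
  have hat := Real.neg_pi_div_two_lt_arctan (w s / c)
  rw [lt_div_iff₀ hc0] at hs1
  simp only [Function.comp_apply] at hs1
  have : F s = arctan (w s / c) - c * log (Xk a k s) := rfl
  linarith
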